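/- arXiv:2504.14674 — 2 statements merged into one kernel-verified Lean document; each statement's English description precedes it below -/
import Mathlib

section
/- Let m ≥ 7 be odd, h = (m−1)/2, and let f₅(x) = x^{2^{2h} − 2^h + 1} (the Kasami monomial x^{2^{m−1} − 2^{(m−1)/2} + 1}). For the binary sequence s_t = Tr(f₅(α^t + 1)), the linear span is L_s = 1 + m(2^{(m−1)/2} − 1) if m ≡ 1 (mod 4), and L_s = 1 + m(2^{(m−1)/2} − 3) if m ≡ 3 (mod 4). -/
open Polynomial
open scoped Classical

/-- The polynomial S(x) = ∑_{t=0}^{v−1} s_t x^t ∈ 𝔽₂[x], where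
    s_t = Tr(f(α^t + 1)) and v = 2^m − 1. -/
noncomputable def traceSeqPoly (m : ℕ) (α : GaloisField 2 m)
    (f : GaloisField 2 m → GaloisField 2 m) : Polynomial (ZMod 2) :=
  ∑ t ∈ Finset.range (2 ^ m - 1),
    C (Algebra.trace (ZMod 2) (GaloisField 2 m) (f (α ^ t + 1))) * X ^ t

/-- The minimal polynomial of the sequence:
    g_s(x) = (x^v − 1)/gcd(x^v − 1, S(x)). Its degree is the linear span L_s. -/
noncomputable def genPoly (m : ℕ) (α : GaloisField 2 m)
    (f : GaloisField 2 m → GaloisField 2 m) : Polynomial (ZMod 2) :=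
  (X ^ (2 ^ m - 1) - 1) /
    EuclideanDomain.gcd (X ^ (2 ^ m - 1) - 1) (traceSeqPoly m α f)

/-- The binary cyclic code C_s = {c ∈ 𝔽₂[x] : deg c < v and g_s ∣ c},
    as an 𝔽₂-submodule of 𝔽₂[x]. -/
noncomputable def codeC (m : ℕ) (α : GaloisField 2 m)
    (f : GaloisField 2 m → GaloisField 2 m) :
    Submodule (ZMod 2) (Polynomial (ZMod 2)) :=
  Polynomial.degreeLT (ZMod 2) (2 ^ m - 1) ⊓
    (Ideal.span {genPoly m α f}).restrictScalars (ZMod 2)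

/-- The set of Hamming weights (numbers of nonzero coefficients) of the
    nonzero codewords of a code; the minimum distance is its least element. -/
def wtSet (Cs : Submodule (ZMod 2) (Polynomial (ZMod 2))) : Set ℕ :=
  {w | ∃ c : Polynomial (ZMod 2), c ∈ Cs ∧ c ≠ 0 ∧ c.support.card = w}


/-- odd numbers in `[a,b)` -/
def odSet (a b : ℕ) : Finset ℕ := (Finset.Ico a b).filter (fun k => k % 2 = 1)

lemma mem_odSet {a b k : ℕ} : k ∈ odSet a b ↔ (a ≤ k ∧ k < b) ∧ k % 2 = 1 := by
  simp [odSet]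

lemma odSet_succ (a b : ℕ) (hab : a ≤ b) :
    odSet (2*a) (2*(b+1)) = insert (2*b+1) (odSet (2*a) (2*b)) := by
  ext k; simp only [mem_odSet, Finset.mem_insert]; omega

lemma card_odSet (a b : ℕ) (hab : a ≤ b) : (odSet (2*a) (2*b)).card = b - a := by
  induction b, hab using Nat.le_induction with
  | base => simp [odSet]
  | succ b hab ih =>
    rw [odSet_succ a b hab, Finset.card_insert_of_notMem, ih]
    · omega
    · simp only [mem_odSet]; omega

lemma sum_double (T : ℕ → ZMod 2) (hT : ∀ a, T (2*a) = T a) (a b : ℕ) (hab : a ≤ b) :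
    ∑ k ∈ Finset.Ico (2*a) (2*b), T k
      = ∑ k ∈ Finset.Ico a b, T k + ∑ k ∈ odSet (2*a) (2*b), T k := by
  induction b, hab using Nat.le_induction with
  | base => simp [odSet]
  | succ b hab ih =>
    rw [odSet_succ a b hab, Finset.sum_insert, Finset.sum_Ico_succ_top hab,
      show 2*(b+1) = 2*b+1+1 by ring, Finset.sum_Ico_succ_top (by omega),
      Finset.sum_Ico_succ_top (by omega), ih, hT]
    · ring
    · simp only [mem_odSet]; omega

lemma sum_odSet_split (T : ℕ → ZMod 2) (a b c : ℕ) (hab : a ≤ b) (hbc : b ≤ c) :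
    ∑ k ∈ odSet a c, T k = ∑ k ∈ odSet a b, T k + ∑ k ∈ odSet b c, T k := by
  rw [← Finset.sum_union]
  · congr 1; ext k; simp only [mem_odSet, Finset.mem_union]; omega
  · rw [Finset.disjoint_left]; intro k; simp only [mem_odSet]; omega

/-- the short coset leaders -/
def bSet : ℕ → Finset ℕ
  | 0 => ∅
  | 1 => ∅
  | 2 => {1, 3}
  | n+3 => bSet (n+1) ∪ (odSet (2^(n+1)) (3*2^n) ∪ odSet (3*2^(n+1)) (2^(n+3)))

lemma bSet_mem : ∀ (n k : ℕ), k ∈ bSet n → k < 2^n ∧ k % 2 = 1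
  | 0, k, h => by simp [bSet] at h
  | 1, k, h => by simp [bSet] at h
  | 2, k, h => by
    simp [bSet] at h; omega
  | n+3, k, h => by
    simp only [bSet, Finset.mem_union, mem_odSet] at h
    rcases h with h | h
    · have := bSet_mem (n+1) k h
      simp only [pow_succ] at *
      omega
    · simp only [pow_succ] at *
      omega

lemma bSet_disj (n : ℕ) : Disjoint (bSet (n+1)) (odSet (2^(n+1)) (3*2^n) ∪ odSet (3*2^(n+1)) (2^(n+3))) := by
  rw [Finset.disjoint_left]
  intro k hk
  have := (bSet_mem _ _ hk).1
  simp only [Finset.mem_union, mem_odSet]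
  simp only [pow_succ] at *
  omega

lemma od_disj (n : ℕ) : Disjoint (odSet (2^(n+1)) (3*2^n)) (odSet (3*2^(n+1)) (2^(n+3))) := by
  rw [Finset.disjoint_left]
  intro k hk
  simp only [mem_odSet] at *
  simp only [pow_succ] at *
  omega

lemma card_d (n : ℕ) : (odSet (2^(n+2)) (3*2^(n+1))).card = 2^n := by
  have := card_odSet (2^(n+1)) (3*2^n) (by rw [pow_succ]; omega)
  rw [show 2^(n+2) = 2*2^(n+1) by ring, show 3*2^(n+1) = 2*(3*2^n) by ring, this, pow_succ]
  omega

lemma card_e (n : ℕ) : (odSet (3*2^(n+1)) (2^(n+3))).card = 2^n := by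
  have := card_odSet (3*2^n) (2^(n+2)) (by simp only [pow_succ]; omega)
  rw [show 2^(n+3) = 2*2^(n+2) by ring, show 3*2^(n+1) = 2*(3*2^n) by ring, this]
  simp only [pow_succ]
  omega

lemma bSet_card_step (n : ℕ) : (bSet (n+4)).card = (bSet (n+2)).card + 2^n + 2^(n+1) := by
  rw [bSet, Finset.card_union_of_disjoint (bSet_disj _), Finset.card_union_of_disjoint (od_disj _),
    card_d, card_e]
  ring

lemma bSet_card_even (k : ℕ) : (bSet (2*k+2)).card = 2^(2*k) + 1 := by
  induction k with
  | zero => rfl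
  | succ k ih =>
    rw [show 2*(k+1)+2 = 2*k+4 by ring, bSet_card_step, ih]; ring

lemma bSet_card_odd (k : ℕ) : (bSet (2*k+3)).card + 1 = 2^(2*k+1) := by
  induction k with
  | zero => decide
  | succ k ih =>
    rw [show 2*(k+1)+3 = 2*k+1+4 by ring, bSet_card_step, show 2*k+1+2 = 2*k+3 by ring,
      show 2^(2*(k+1)+1) = 4*2^(2*k+1) by ring, ← ih]
    rw [show 2^(2*k+1+1) = 2*2^(2*k+1) by ring, ← ih]; ring

/-- first key identity -/
lemma sum_F (T : ℕ → ZMod 2) (hT : ∀ a, T (2*a) = T a) : ∀ n : ℕ,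
    ∑ k ∈ Finset.Ico 0 (2^(n+1)), T k + ∑ k ∈ Finset.Ico (2^(n+2)) (3*2^(n+1)), T k
    = T 0 + ∑ k ∈ bSet (n+1), T k + ∑ k ∈ odSet (2^(n+1)) (3*2^n), T k
      + ∑ k ∈ odSet (2^(n+2)) (3*2^(n+1)), T k
  | 0 => by
    have h1 : Finset.Ico 0 (2^(0+1)) = {0,1} := by decide
    have h2 : Finset.Ico (2^(0+2)) (3*2^(0+1)) = {4,5} := by decide
    have h3 : odSet (2^(0+1)) (3*2^0) = ∅ := by decide
    have h4 : odSet (2^(0+2)) (3*2^(0+1)) = {5} := by decide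
    have e2 := hT 1
    have e4 := hT 2
    norm_num at e2 e4
    rw [h1,h2,h3,h4]
    simp [bSet, e4, e2]
    linear_combination (CharTwo.add_self_eq_zero (T 1))
  | 1 => by
    have h1 : Finset.Ico 0 (2^(1+1)) = {0,1,2,3} := by decide
    have h2 : Finset.Ico (2^(1+2)) (3*2^(1+1)) = {8,9,10,11} := by decide
    have h3 : odSet (2^(1+1)) (3*2^1) = {5} := by decide
    have h4 : odSet (2^(1+2)) (3*2^(1+1)) = {9,11} := by decide
    have e2 := hT 1
    have e4 := hT 2
    have e8 := hT 4
    have e10 := hT 5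
    norm_num at e2 e4 e8 e10
    rw [h1,h2,h3,h4]
    simp [bSet, e4, e2, e8, e10]
    linear_combination (CharTwo.add_self_eq_zero (T 1))
  | n+2 => by
    have ih := sum_F T hT n
    have a1 := sum_double T hT 0 (2^(n+1)) (by positivity)
    have a2 := sum_double T hT 0 (2^(n+2)) (by positivity)
    have b1 := sum_double T hT (2^(n+2)) (3*2^(n+1)) (by simp only [pow_succ]; omega)
    have b2 := sum_double T hT (2^(n+3)) (3*2^(n+2)) (by simp only [pow_succ]; omega)
    have c1 := sum_odSet_split T 0 (2^(n+2)) (2^(n+3)) (by positivity) (by simp only [pow_succ]; omega)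
    have c2 := sum_odSet_split T (2^(n+2)) (3*2^(n+1)) (2^(n+3)) (by simp only [pow_succ]; omega) (by simp only [pow_succ]; omega)
    rw [show 2 * 2^(n+1) = 2^(n+2) by ring] at a1
    rw [show 2 * 2^(n+2) = 2^(n+3) by ring] at a2 b1
    rw [show 2 * 2^(n+3) = 2^(n+4) by ring] at b2
    rw [show 2 * (3*2^(n+1)) = 3*2^(n+2) by ring] at b1
    rw [show 2 * (3*2^(n+2)) = 3*2^(n+3) by ring] at b2
    rw [mul_zero] at a1 a2
    rw [show n+2+1 = n+3 by ring, show n+2+2 = n+4 by ring, bSet, Finset.sum_union (bSet_disj _),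
      Finset.sum_union (od_disj _), a2, b2, a1, b1, c1, c2]
    linear_combination ih + (CharTwo.add_self_eq_zero (∑ k ∈ odSet 0 (2^(n+2)), T k)) + CharTwo.add_self_eq_zero (∑ k ∈ odSet (2^(n+2)) (3*2^(n+1)), T k)

/-- the coset leaders -/
def rSet (h : ℕ) : Finset ℕ :=
  bSet h ∪ ((odSet (2^h) (3*2^(h-1))).erase (2^h+1) ∪ (odSet (2^(h+1)) (3*2^h)).erase (2^(h+1)+1))

lemma rSet_disj1 (n : ℕ) : Disjoint ((odSet (2^(n+1)) (3*2^n)).erase (2^(n+1)+1))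
    ((odSet (2^(n+2)) (3*2^(n+1))).erase (2^(n+2)+1)) := by
  rw [Finset.disjoint_left]
  intro k hk
  simp only [mem_odSet, Finset.mem_erase] at *
  simp only [pow_succ] at *
  omega

lemma rSet_disj2 (n : ℕ) : Disjoint (bSet (n+1)) ((odSet (2^(n+1)) (3*2^n)).erase (2^(n+1)+1) ∪
    (odSet (2^(n+2)) (3*2^(n+1))).erase (2^(n+2)+1)) := by
  rw [Finset.disjoint_left]
  intro k hk
  have := (bSet_mem _ _ hk).1
  simp only [mem_odSet, Finset.mem_erase, Finset.mem_union] at *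
  simp only [pow_succ] at *
  omega

lemma mem_d (n : ℕ) : 2^(n+2)+1 ∈ odSet (2^(n+2)) (3*2^(n+1)) := by
  have := Nat.one_le_two_pow (n := n)
  simp only [mem_odSet, pow_succ]; omega

lemma rSet_card (n : ℕ) : (rSet (n+2)).card + 2 = (bSet (n+2)).card + 2^n + 2^(n+1) := by
  have := Nat.one_le_two_pow (n := n)
  rw [rSet, show n+2-1 = n+1 by omega, Finset.card_union_of_disjoint (rSet_disj2 (n+1)),
    Finset.card_union_of_disjoint (rSet_disj1 (n+1)), Finset.card_erase_of_mem (mem_d n),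
    Finset.card_erase_of_mem (mem_d (n+1)), card_d n, card_d (n+1), pow_succ,
    show n+1+1 = n+2 by ring]
  omega

lemma rSet_mem (h k : ℕ) (hh : 1 ≤ h) (hk : k ∈ rSet h) :
    k % 2 = 1 ∧ k < 3*2^h ∧ k ≠ 2^(h+1)+1 := by
  obtain ⟨n, rfl⟩ : ∃ n, h = n+1 := ⟨h-1, by omega⟩
  simp only [rSet, Nat.add_sub_cancel, Finset.mem_union, Finset.mem_erase, mem_odSet] at hk
  rcases hk with hk | hk
  · have := bSet_mem (n+1) k hk
    simp only [pow_succ] at *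
    omega
  · simp only [pow_succ] at *
    omega

lemma rSet_sum (T : ℕ → ZMod 2) (hT : ∀ a, T (2*a) = T a) (n : ℕ)
    (hc : T (2^(n+2)+1) = T (2^(n+3)+1)) :
    ∑ k ∈ Finset.Ico 0 (2^(n+2)), T k + ∑ k ∈ Finset.Ico (2^(n+3)) (3*2^(n+2)), T k
    = T 0 + ∑ k ∈ rSet (n+2), T k := by
  rw [sum_F T hT (n+1), rSet, show n+2-1 = n+1 by omega, Finset.sum_union (rSet_disj2 (n+1)),
    Finset.sum_union (rSet_disj1 (n+1)), ← Finset.add_sum_erase _ _ (mem_d n),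
    ← Finset.add_sum_erase _ _ (mem_d (n+1))]
  rw [show n+1+2 = n+3 by ring] at *
  rw [show n+1+1 = n+2 by ring] at *
  linear_combination hc + (CharTwo.add_self_eq_zero (T (2^(n+3)+1)))
/-- congruence arithmetic: small shift -/
lemma shift_small (h d r s : ℕ) (hh : 3 ≤ h) (hd : d + 1 ≤ h) (hr : r < 3*2^h) (hs : s < 3*2^h)
    (hs0 : s % 2 = 1)
    (hc : 2^d*r ≡ s [MOD (2^(2*h+1) - 1)]) : d = 0 ∧ r = s := by
  have e1 : 2^d * 2 ≤ 2^h := by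
    rw [← pow_succ]; exact Nat.pow_le_pow_right (by norm_num) hd
  have e2 : 2^(2*h+1) = 2 * (2^h*2^h) := by ring
  have e3 : 8 ≤ 2^h := by
    calc 8 = 2^3 := by norm_num
      _ ≤ 2^h := Nat.pow_le_pow_right (by norm_num) hh
  have e4 : 2^d*r < 2^(2*h+1) - 1 := by
    rw [e2]
    have : 2^d*2*r ≤ 2^h*(3*2^h - 1) := Nat.mul_le_mul e1 (by omega)
    rw [Nat.mul_sub, mul_one] at this
    have h5 : 2^h*(3*2^h) = 3*(2^h*2^h) := by ring
    have h6 : 8*8 ≤ 2^h*2^h := Nat.mul_le_mul e3 e3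
    rw [h5] at this
    have h7 : 2^d*2*r = 2*(2^d*r) := by ring
    omega
  have e5 : s < 2^(2*h+1) - 1 := by
    rw [e2]
    have h6 : 8*2^h ≤ 2^h*2^h := Nat.mul_le_mul e3 le_rfl
    omega
  have e6 : 2^d*r = s := by
    have := hc
    rwa [Nat.ModEq, Nat.mod_eq_of_lt e4, Nat.mod_eq_of_lt e5] at this
  rcases Nat.eq_zero_or_pos d with rfl | hd0
  · simpa using e6
  · exfalso
    obtain ⟨c, rfl⟩ : ∃ c, d = c+1 := ⟨d-1, by omega⟩
    rw [pow_succ, mul_comm (2^c) 2, mul_assoc] at e6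
    omega

lemma shift_h (h r s : ℕ) (hh : 3 ≤ h) (hr : r < 3*2^h) (hs : s < 3*2^h)
    (hr0 : r % 2 = 1) (hs0 : s % 2 = 1) (hr1 : r ≠ 2^(h+1)+1)
    (hc : 2^h*r ≡ s [MOD (2^(2*h+1) - 1)]) : False := by
  have e2 : 2^(2*h+1) = 2 * (2^h*2^h) := by ring
  have e3 : 8 ≤ 2^h := by
    calc 8 = 2^3 := by norm_num
      _ ≤ 2^h := Nat.pow_le_pow_right (by norm_num) hh
  have h6 : 8*2^h ≤ 2^h*2^h := Nat.mul_le_mul e3 le_rfl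
  have e5 : s < 2^(2*h+1) - 1 := by
    rw [e2]
    omega
  have he : 2^h % 2 = 0 := by
    obtain ⟨c, rfl⟩ : ∃ c, h = c+1 := ⟨h-1, by omega⟩
    rw [pow_succ]; omega
  by_cases hlt : r < 2*2^h
  · have e4 : 2^h*r < 2^(2*h+1) - 1 := by
      have : 2^h*r ≤ 2^h*(2*2^h-1) := Nat.mul_le_mul le_rfl (by omega)
      rw [Nat.mul_sub, mul_one, show 2^h*(2*2^h) = 2*(2^h*2^h) by ring] at this
      rw [e2]; omega
    rw [Nat.ModEq, Nat.mod_eq_of_lt e4, Nat.mod_eq_of_lt e5] at hc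
    have : (2^h*r) % 2 = 0 := by rw [Nat.mul_mod, he]; simp
    omega
  · obtain ⟨r0, rfl⟩ : ∃ r0, r = 2*2^h + r0 := ⟨r - 2*2^h, by omega⟩
    have hm : 2^h*(2*2^h+r0) = (2^(2*h+1) - 1) + (2^h*r0+1) := by
      rw [mul_add, show 2^h*(2*2^h) = 2*(2^h*2^h) by ring, e2]; omega
    have e4 : 2^h*r0 + 1 < 2^(2*h+1) - 1 := by
      have : 2^h*r0 ≤ 2^h*2^h := Nat.mul_le_mul le_rfl (by omega)
      rw [e2]; omega
    rw [hm, Nat.ModEq, Nat.add_mod_left, Nat.mod_eq_of_lt e4, Nat.mod_eq_of_lt e5] at hc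
    have h3 : 3 ≤ r0 := by
      rw [pow_succ] at hr1
      omega
    have : 2^h*3 ≤ 2^h*r0 := Nat.mul_le_mul le_rfl h3
    omega

lemma shift_all (h d r s : ℕ) (hh : 3 ≤ h) (hd : d < 2*h+1) (hr : r < 3*2^h) (hs : s < 3*2^h)
    (hr0 : r % 2 = 1) (hs0 : s % 2 = 1) (hr1 : r ≠ 2^(h+1)+1) (hs1 : s ≠ 2^(h+1)+1)
    (hc : 2^d*r ≡ s [MOD (2^(2*h+1) - 1)]) : d = 0 ∧ r = s := by
  have hrev : 2^(2*h+1-d)*s ≡ r [MOD (2^(2*h+1) - 1)] := by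
    have h1 := (hc.mul_left (2^(2*h+1-d))).symm
    rw [← mul_assoc, ← pow_add, Nat.sub_add_cancel hd.le] at h1
    refine h1.trans ?_
    have h2 : 2^(2*h+1) ≡ 1 [MOD (2^(2*h+1) - 1)] :=
      ((Nat.modEq_iff_dvd' Nat.one_le_two_pow).2 dvd_rfl).symm
    simpa using h2.mul_right r
  by_cases h1 : d + 1 ≤ h
  · exact shift_small h d r s hh h1 hr hs hs0 hc
  by_cases h2 : d = h
  · subst h2
    exact (shift_h d r s hh hr hs hr0 hs0 hr1 hc).elim
  by_cases h3 : d = h + 1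
  · subst h3
    rw [show 2*h+1-(h+1) = h by omega] at hrev
    exact (shift_h h s r hh hs hr hs0 hr0 hs1 hrev).elim
  · have := (shift_small h _ s r hh (by omega) hs hr hr0 hrev).1
    omega

lemma shift_inj (h i j r s : ℕ) (hh : 3 ≤ h) (hi : i < 2*h+1) (hj : j < 2*h+1)
    (hr : r ∈ rSet h) (hs : s ∈ rSet h)
    (hc : 2^i*r ≡ 2^j*s [MOD (2^(2*h+1) - 1)]) : i = j ∧ r = s := by
  obtain ⟨r0, r1, r2⟩ := rSet_mem h r (by omega) hr
  obtain ⟨s0, s1, s2⟩ := rSet_mem h s (by omega) hs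
  have hcop : ∀ k, Nat.gcd (2^(2*h+1) - 1) (2^k) = 1 := by
    intro k
    apply Nat.Coprime.pow_right
    rw [Nat.coprime_two_right, Nat.odd_iff]
    rw [pow_succ]
    have := Nat.one_le_two_pow (n := 2*h)
    omega
  rcases le_total i j with hij | hij
  · obtain ⟨d, rfl⟩ := Nat.exists_eq_add_of_le hij
    rw [pow_add 2 i d, mul_assoc] at hc
    have := Nat.ModEq.cancel_left_of_coprime (hcop i) hc
    have := shift_all h d s r hh (by omega) s1 r1 s0 r0 s2 r2 this.symm
    exact ⟨by omega, this.2.symm⟩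
  · obtain ⟨d, rfl⟩ := Nat.exists_eq_add_of_le hij
    rw [pow_add 2 j d, mul_assoc] at hc
    have := Nat.ModEq.cancel_left_of_coprime (hcop j) hc
    have := shift_all h d r s hh (by omega) r1 s1 r0 s0 r2 s2 this
    exact ⟨by omega, this.2⟩

lemma shift_ne_zero (h i r : ℕ) (hh : 3 ≤ h)
    (hr : r ∈ rSet h) : ¬ (2^(2*h+1) - 1) ∣ 2^i*r := by
  obtain ⟨r0, r1, r2⟩ := rSet_mem h r (by omega) hr
  intro hdvd
  have hcop : Nat.Coprime (2^(2*h+1) - 1) (2^i) := by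
    apply Nat.Coprime.pow_right
    rw [Nat.coprime_two_right, Nat.odd_iff]
    rw [pow_succ]
    have := Nat.one_le_two_pow (n := 2*h)
    omega
  have := Nat.le_of_dvd (by omega) (hcop.dvd_of_dvd_mul_left hdvd)
  have e2 : 2^(2*h+1) = 2 * (2^h*2^h) := by ring
  have e3 : 8 ≤ 2^h := by
    calc 8 = 2^3 := by norm_num
      _ ≤ 2^h := Nat.pow_le_pow_right (by norm_num) hh
  have h6 : 8*2^h ≤ 2^h*2^h := Nat.mul_le_mul e3 le_rfl
  omega
lemma natDegree_quot_gen {F K : Type*} [Field F] [Field K] [Algebra F K]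
    (P S G : F[X]) (hGP : G ∣ P)
    (hGβ : ∀ β : K, aeval β G = 0 ↔ aeval β P = 0 ∧ aeval β S = 0)
    (hP0 : P ≠ 0) (hPsep : P.Separable) (hPs : (P.map (algebraMap F K)).Splits)
    (hPβ : ∀ β : K, aeval β P = 0 ↔ β ≠ 0) (Z : Finset K)
    (hZ0 : ∀ β ∈ Z, β ≠ 0)
    (hZ : ∀ β, β ≠ 0 → (aeval β S ≠ 0 ↔ β ∈ Z)) :
    (P / G).natDegree = Z.card := by
  have hG0 : G ≠ 0 := fun h => hP0 (by rw [h] at hGP; exact zero_dvd_iff.1 hGP)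
  have hmul : P = G * (P / G) := (EuclideanDomain.mul_div_cancel' hG0 hGP).symm
  generalize P / G = Q at *
  have hQP : Q ∣ P := Dvd.intro_left _ hmul.symm
  have hQ0 : Q ≠ 0 := fun h => hP0 (by rw [h] at hQP; exact zero_dvd_iff.1 hQP)
  have hQsep := hPsep.of_dvd hQP
  have hQs : (Q.map (algebraMap F K)).Splits :=
    hPs.of_dvd ((Polynomial.map_ne_zero_iff (algebraMap F K).injective).2 hP0)
      (Polynomial.map_dvd _ hQP)
  rw [← card_rootSet_eq_natDegree hQsep hQs, ← Set.toFinset_card]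
  congr 1
  ext β
  rw [Set.mem_toFinset, mem_rootSet]
  have hPQ : aeval β P = aeval β G * aeval β Q := by rw [← map_mul, ← hmul]
  have hnot : ¬ (aeval β G = 0 ∧ aeval β Q = 0) := by
    rintro ⟨h1, h2⟩
    have hc : IsCoprime G Q := by
      have := hPsep
      rw [hmul] at this
      exact this.isCoprime
    obtain ⟨a, b, hab⟩ := hc
    have := congrArg (aeval β) hab
    simp [h1, h2] at this
  constructor
  · rintro ⟨-, h⟩
    have hb : β ≠ 0 := (hPβ β).1 (by rw [hPQ, h, mul_zero])
    rw [← hZ β hb]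
    intro h'
    exact hnot ⟨(hGβ β).2 ⟨(hPβ β).2 hb, h'⟩, h⟩
  · intro h
    have hb := hZ0 β h
    refine ⟨hQ0, ?_⟩
    have := (hPβ β).2 hb
    rw [hPQ] at this
    rcases mul_eq_zero.1 this with h' | h'
    · exact ((hZ β hb).2 h ((hGβ β).1 h').2).elim
    · exact h'

lemma natDegree_quot {K : Type*} [Field K] [Fintype K] [Algebra (ZMod 2) K]
    (m : ℕ) (hm : m ≠ 0) (hcard : Fintype.card K = 2^m) (α : K) (hα : orderOf α = 2 ^ m - 1)
    (S : (ZMod 2)[X]) (Z : Finset K)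
    (hZ0 : ∀ β ∈ Z, β ≠ 0)
    (hZ : ∀ β, β ≠ 0 → (aeval β S ≠ 0 ↔ β ∈ Z)) :
    ((X ^ (2 ^ m - 1) - 1) / EuclideanDomain.gcd (X ^ (2 ^ m - 1) - 1) S).natDegree = Z.card := by
  have hv : 0 < 2^m - 1 := by
    have := Nat.one_lt_two_pow hm
    omega
  have hvo : ((2^m - 1 : ℕ) : ZMod 2) ≠ 0 := by
    rw [Nat.cast_sub Nat.one_le_two_pow]
    simp [hm, CharTwo.two_eq_zero]
  refine natDegree_quot_gen _ S _ (EuclideanDomain.gcd_dvd_left _ _) ?_ ?_ (X_pow_sub_one_separable_iff.2 hvo) ?_ ?_ Z hZ0 hZ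
  · intro β
    simp only [aeval_def]
    exact root_gcd_iff_root_left_right
  · have := (monic_X_pow_sub_C (1 : ZMod 2) hv.ne').ne_zero
    rwa [C_1] at this
  · have hprim : IsPrimitiveRoot α (2^m-1) := by
      rw [← hα]; exact IsPrimitiveRoot.orderOf α
    have := X_pow_sub_one_splits hprim
    rwa [Polynomial.map_sub, Polynomial.map_pow, map_X, Polynomial.map_one]
  · intro β
    simp only [map_sub, map_pow, aeval_X, map_one]
    constructor
    · rintro h rfl
      rw [zero_pow hv.ne'] at h
      simp at h
    · intro h
      rw [← hcard, FiniteField.pow_card_sub_one_eq_one β h, sub_self]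

lemma geom_two_pow {A : Type*} [CommRing A] [CharP A 2] (z : A) (n : ℕ) :
    (z+1)^(2^n-1) = ∑ k ∈ Finset.range (2^n), z^k := by
  induction n with
  | zero => simp
  | succ n ih =>
    have := Nat.one_le_two_pow (n := n)
    rw [show 2^(n+1)-1 = (2^n-1) + 2^n by rw [pow_succ]; omega, pow_add, ih, pow_succ 2 n, mul_two,
      Finset.sum_range_add, add_pow_char_pow, mul_add, one_pow, mul_one, add_comm, Finset.sum_mul]
    congr 1
    exact Finset.sum_congr rfl fun k _ => by ring

/-- the sequence in terms of coset leaders -/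
lemma seq_eq (h : ℕ) (hh : 3 ≤ h) {K : Type*} [Field K] [Fintype K] [Algebra (ZMod 2) K] [CharP K 2]
    (hfr : Module.finrank (ZMod 2) K = 2*h+1) (hcard : Fintype.card K = 2^(2*h+1)) (y : K) :
    algebraMap (ZMod 2) K
      (Algebra.trace (ZMod 2) K ((y+1)^(2^(2*h)-2^h+1)))
    = 1 + ∑ p ∈ rSet h ×ˢ Finset.range (2*h+1), y^(2^p.2*p.1) := by
  have htr : ∀ x : K, algebraMap (ZMod 2) K
      (Algebra.trace (ZMod 2) K x)
      = ∑ i ∈ Finset.range (2*h+1), x^(2^i) := by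
    intro x
    rw [FiniteField.algebraMap_trace_eq_sum_pow, hfr, Nat.card_zmod]
  have hq : ∀ x : K, x^(2^(2*h+1)) = x := by
    intro x; rw [← hcard, FiniteField.pow_card]
  have htr2 : ∀ x : K, Algebra.trace (ZMod 2) K (x^2)
      = Algebra.trace (ZMod 2) K x := by
    intro x
    apply (algebraMap (ZMod 2) K).injective
    rw [htr, htr]
    have e1 := Finset.sum_range_succ (fun i => x^(2^i)) (2*h+1)
    have e2 := Finset.sum_range_succ' (fun i => x^(2^i)) (2*h+1)
    rw [e1, hq] at e2
    simp only [pow_zero, pow_one] at e2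
    rw [add_right_cancel e2]
    exact Finset.sum_congr rfl fun i _ => by rw [← pow_mul, pow_succ, mul_comm]
  have htrn : ∀ (n : ℕ) (x : K),
      Algebra.trace (ZMod 2) K (x^(2^n))
      = Algebra.trace (ZMod 2) K x := by
    intro n x
    induction n with
    | zero => simp
    | succ n ih => rw [pow_succ, pow_mul, htr2, ih]
  set T : ℕ → ZMod 2 := fun a => Algebra.trace (ZMod 2) K (y^a) with hT
  have hT2 : ∀ a, T (2*a) = T a := by
    intro a
    simp only [hT]
    rw [mul_comm, pow_mul, htr2]
  have hTn : ∀ n a, T (2^n*a) = T a := by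
    intro n a
    simp only [hT]
    rw [mul_comm, pow_mul, htrn]
  have hTm : ∀ a b, T (2^(2*h+1)*a+b) = T (a+b) := by
    intro a b
    simp only [hT]
    rw [pow_add, pow_mul, hq, ← pow_add]
  have h1 : Algebra.trace (ZMod 2) K ((y+1)^(2^(2*h)-2^h+1))
      = T 0 + ∑ k ∈ rSet h, T k := by
    obtain ⟨n, rfl⟩ : ∃ n, h = n+2 := ⟨h-2, by omega⟩
    rw [← rSet_sum T hT2 n]
    · have e : 2^(2*(n+2)) - 2^(n+2) = 2^(n+2)*(2^(n+2)-1) := by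
        rw [Nat.mul_sub, ← pow_add, mul_one]; congr 2; ring
      rw [e, pow_succ, pow_mul, add_pow_char_pow, one_pow, geom_two_pow, mul_add, mul_one,
        Finset.sum_mul, map_add, map_sum, map_sum, add_comm, ← Finset.range_eq_Ico]
      congr 1
      · refine Finset.sum_congr rfl fun k _ => ?_
        rw [← hTn (n+2) k, hT]
        simp only [pow_mul]
      · rw [Finset.sum_Ico_eq_sum_range,
          show 3*2^(n+2) - 2^(n+3) = 2^(n+2) by rw [pow_succ 2 (n+2)]; omega]
        refine Finset.sum_congr rfl fun k _ => ?_
        have e3 := hTn (n+3) (2^(n+2)*k+1)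
        rw [show 2^(n+3)*(2^(n+2)*k+1) = 2^(2*(n+2)+1)*k + 2^(n+3) by ring, hTm, add_comm] at e3
        rw [e3, hT]
        simp only [pow_add, pow_mul, pow_one]
    · have e3 := hTn (n+2) (2^(n+3)+1)
      rw [show 2^(n+2)*(2^(n+3)+1) = 2^(2*(n+2)+1)*1 + 2^(n+2) by ring, hTm, add_comm] at e3
      exact e3
  have hT0 : T 0 = 1 := by
    simp only [hT, pow_zero]
    have := Algebra.trace_algebraMap (S := K) (1 : ZMod 2)
    rw [map_one, hfr] at this
    rw [this]
    simp [show (2 : ZMod 2) = 0 from rfl]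
  rw [h1, hT0, map_add, map_one, map_sum, Finset.sum_product]
  congr 1
  refine Finset.sum_congr rfl fun k _ => ?_
  simp only [hT]
  rw [htr]
  exact Finset.sum_congr rfl fun i _ => by rw [← pow_mul, mul_comm]

/-- set of non-roots -/
noncomputable def zSet (h : ℕ) (α : GaloisField 2 (2*h+1)) : Finset (GaloisField 2 (2*h+1)) :=
  insert 1 ((rSet h ×ˢ Finset.range (2*h+1)).image fun p => (α^(2^p.2*p.1))⁻¹)

lemma main_deg (h : ℕ) (hh : 3 ≤ h) (α : GaloisField 2 (2*h+1))
    (hα : orderOf α = 2 ^ (2*h+1) - 1)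
    (f : GaloisField 2 (2*h+1) → GaloisField 2 (2*h+1))
    (hf : ∀ x, f x = x ^ (2 ^ (2 * h) - 2 ^ h + 1)) :
    (genPoly (2*h+1) α f).natDegree = 1 + (2*h+1) * (rSet h).card := by
  have : Fintype (GaloisField 2 (2*h+1)) := Fintype.ofFinite _
  have hcard : Fintype.card (GaloisField 2 (2*h+1)) = 2^(2*h+1) := by
    rw [← Nat.card_eq_fintype_card]; exact GaloisField.card 2 _ (by omega)
  have hv : 1 < 2^(2*h+1) := Nat.one_lt_two_pow (by omega)
  have hα0 : α ≠ 0 := by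
    rintro rfl
    rw [orderOf_zero] at hα
    omega
  have hinj : Set.InjOn (fun p : ℕ × ℕ => (α^(2^p.2*p.1))⁻¹)
      (rSet h ×ˢ Finset.range (2*h+1) : Finset (ℕ × ℕ)) := by
    rintro ⟨r, i⟩ hr ⟨s, j⟩ hs heq
    simp only [Finset.coe_product, Set.mem_prod, Finset.mem_coe, Finset.mem_range] at hr hs
    simp only [inv_inj] at heq
    have hpos : 0 < orderOf α := by omega
    rw [← pow_mod_orderOf α (2^i*r), ← pow_mod_orderOf α (2^j*s)] at heq
    have hmod := pow_injOn_Iio_orderOf (Nat.mod_lt _ hpos) (Nat.mod_lt _ hpos) heq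
    rw [hα] at hmod
    have := shift_inj h i j r s hh hr.2 hs.2 hr.1 hs.1 hmod
    rw [this.1, this.2]
  have hone : (1 : GaloisField 2 (2*h+1)) ∉
      (rSet h ×ˢ Finset.range (2*h+1)).image fun p => (α^(2^p.2*p.1))⁻¹ := by
    intro hmem
    obtain ⟨⟨r, i⟩, hr, heq⟩ := Finset.mem_image.1 hmem
    simp only [Finset.mem_product, inv_eq_one] at hr heq
    rw [← orderOf_dvd_iff_pow_eq_one, hα] at heq
    exact shift_ne_zero h i r hh hr.1 heq
  have hgeo : ∀ γ : GaloisField 2 (2*h+1), γ ≠ 0 →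
      ∑ t ∈ Finset.range (2^(2*h+1)-1), γ^t = if γ = 1 then 1 else 0 := by
    intro γ hγ
    split_ifs with h1
    · subst h1
      simp only [one_pow, Finset.sum_const, Finset.card_range, nsmul_eq_mul, mul_one]
      rw [Nat.cast_sub hv.le]
      simp [CharTwo.two_eq_zero, CharTwo.neg_eq]
    · rw [geom_sum_eq h1, ← hcard, FiniteField.pow_card_sub_one_eq_one γ hγ]
      simp
  rw [genPoly, natDegree_quot (2*h+1) (by omega) hcard α hα _ (zSet h α)]
  · rw [zSet, Finset.card_insert_of_notMem hone, Finset.card_image_of_injOn hinj,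
      Finset.card_product, Finset.card_range]
    ring
  · intro β hβ
    rw [zSet, Finset.mem_insert, Finset.mem_image] at hβ
    rcases hβ with rfl | ⟨p, -, rfl⟩
    · exact one_ne_zero
    · exact inv_ne_zero (pow_ne_zero _ hα0)
  · intro β hβ
    have key : aeval β (traceSeqPoly (2*h+1) α f) = ∑ z ∈ zSet h α, if z = β then 1 else 0 := by
      rw [zSet, Finset.sum_insert hone, Finset.sum_image hinj]
      have e1 : ∀ t, aeval β (C (Algebra.trace (ZMod 2) (GaloisField 2 (2*h+1)) (f (α ^ t + 1))) * X ^ t)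
          = β^t + ∑ p ∈ rSet h ×ˢ Finset.range (2*h+1), (α^(2^p.2*p.1)*β)^t := by
        intro t
        rw [map_mul, aeval_C, map_pow, aeval_X, hf, seq_eq h hh (GaloisField.finrank 2 (by omega)) hcard, add_mul, one_mul, Finset.sum_mul]
        congr 1
        exact Finset.sum_congr rfl fun p _ => by
          rw [mul_pow, ← pow_mul, ← pow_mul, mul_comm t]
      rw [traceSeqPoly, map_sum, Finset.sum_congr rfl (fun t _ => e1 t), Finset.sum_add_distrib,
        Finset.sum_comm, hgeo β hβ]
      congr 1
      · simp only [eq_comm]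
      · refine Finset.sum_congr rfl fun p _ => ?_
        have hp := pow_ne_zero (2^p.2*p.1) hα0
        rw [hgeo _ (mul_ne_zero hp hβ)]
        congr 1
        rw [inv_eq_iff_eq_inv, eq_comm, mul_eq_one_iff_eq_inv₀ hβ, eq_comm]
    rw [key, Finset.sum_ite_eq']
    split_ifs with h1 <;> simp [h1]

/-- For the Kasami monomial f₅(x) = x^{2^{2h}−2^h+1} = x^{2^{m−1}−2^{(m−1)/2}+1}
over 𝔽_{2^m}, m ≥ 7 odd and h = (m−1)/2, the linear span of the sequence
s_t = Tr(f₅(α^t+1)) is L_s = 1 + m(2^{(m−1)/2} − 1) if m ≡ 1 (mod 4), and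
L_s = 1 + m(2^{(m−1)/2} − 3) if m ≡ 3 (mod 4). -/
theorem stmt13 (m h : ℕ) (hm7 : 7 ≤ m) (hmo : Odd m) (hh : h = (m - 1) / 2)
    (α : GaloisField 2 m) (hα : orderOf α = 2 ^ m - 1)
    (f : GaloisField 2 m → GaloisField 2 m)
    (hf : ∀ x, f x = x ^ (2 ^ (2 * h) - 2 ^ h + 1)) :
    (m % 4 = 1 →
      (genPoly m α f).natDegree = 1 + m * (2 ^ ((m - 1) / 2) - 1)) ∧
    (m % 4 = 3 →
      (genPoly m α f).natDegree = 1 + m * (2 ^ ((m - 1) / 2) - 3)) := by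
  obtain ⟨k, rfl⟩ := hmo
  have hk : h = k := by omega
  subst hk
  have h3 : 3 ≤ h := by omega
  have hr := main_deg h h3 α hα f hf
  have hc := rSet_card (h-2)
  rw [show h-2+2 = h by omega, show h-2+1 = h-1 by omega] at hc
  have hp1 : 2^h = 4*2^(h-2) := by
    rw [show (4:ℕ) = 2^2 by norm_num, ← pow_add]; congr 1; omega
  have hp2 : 2^(h-1) = 2*2^(h-2) := by
    rw [← pow_succ']; congr 1; omega
  rw [hr, ← hh]
  constructor
  · intro h4
    have hb := bSet_card_even (h/2-1)
    rw [show 2*(h/2-1)+2 = h by omega, show 2*(h/2-1) = h-2 by omega] at hb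
    have : (rSet h).card = 2^h - 1 := by omega
    rw [this]
  · intro h4
    have hb := bSet_card_odd (h/2-1)
    rw [show 2*(h/2-1)+3 = h by omega, show 2*(h/2-1)+1 = h-2 by omega] at hb
    have : (rSet h).card = 2^h - 3 := by omega
    rw [this]
end

section
/- Let m ≥ 7 be odd and let f₅(x) = x^{2^{m−1} − 2^{(m−1)/2} + 1}; let s_t = Tr(f₅(α^t + 1)). Then the binary cyclic code C_s has length 2^m − 1 and 𝔽₂-dimension 2^m − 1 − L_s, where L_s = 1 + m(2^{(m−1)/2} − 1) if m ≡ 1 (mod 4) and L_s = 1 + m(2^{(m−1)/2} − 3) if m ≡ 3 (mod 4), and the minimum distance satisfies 2^{(m−3)/2} ≤ d(C_s) ≤ L_s. -/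
open Polynomial
open scoped Classical

lemma sum_split (F : ℕ → ZMod 2) (n : ℕ) :
    ∑ i ∈ Finset.range (2 * n), F i =
      ∑ i ∈ Finset.range n, F (2 * i) + ∑ i ∈ Finset.range n, F (2 * i + 1) := by
  induction n with
  | zero => simp
  | succ k ih =>
    rw [show 2 * (k + 1) = 2 * k + 1 + 1 by ring, Finset.sum_range_succ, Finset.sum_range_succ, ih,
      Finset.sum_range_succ, Finset.sum_range_succ]
    ring

lemma sum_split2 (F : ℕ → ZMod 2) (n : ℕ) :
    ∑ i ∈ Finset.range (2 * n), F i =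
      ∑ i ∈ Finset.range n, F i + ∑ i ∈ Finset.range n, F (n + i) := by
  rw [two_mul, Finset.sum_range_add]

lemma B_split (T : ℕ → ZMod 2) (hT : ∀ i, T (2 * i) = T i) (n c : ℕ) :
    ∑ i ∈ Finset.range (2 ^ (n + 1)), T (2 * c + i) =
      ∑ i ∈ Finset.range (2 ^ n), T (c + i) +
      ∑ i ∈ Finset.range (2 ^ n), T (2 * c + (2 * i + 1)) := by
  rw [pow_succ', sum_split]
  congr 1
  refine Finset.sum_congr rfl fun i _ => ?_
  rw [← mul_add, hT]

/-- adjoining a progression of odd numbers to a finite set. -/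
lemma adjoin (J : Finset ℕ) (c k : ℕ) (hJ : ∀ j ∈ J, j ≤ c) :
    ∃ J' : Finset ℕ, J'.card = J.card + k ∧
      (∀ j, j ∈ J' ↔ j ∈ J ∨ ∃ i < k, j = c + (2 * i + 1)) ∧
      ∀ T : ℕ → ZMod 2, ∑ j ∈ J', T j =
        ∑ j ∈ J, T j + ∑ i ∈ Finset.range k, T (c + (2 * i + 1)) := by
  have hd : Disjoint J ((Finset.range k).image fun i => c + (2 * i + 1)) := by
    rw [Finset.disjoint_left]
    intro j hj hj'
    simp only [Finset.mem_image] at hj'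
    obtain ⟨i, _, rfl⟩ := hj'
    have := hJ _ hj
    omega
  have hinj : Set.InjOn (fun i => c + (2 * i + 1)) (Finset.range k : Set ℕ) := by
    intro a _ b _ hab
    simp only at hab
    omega
  refine ⟨J ∪ (Finset.range k).image fun i => c + (2 * i + 1), ?_, ?_, ?_⟩
  · rw [Finset.card_union_of_disjoint hd, Finset.card_image_of_injOn hinj, Finset.card_range]
  · intro j
    simp only [Finset.mem_union, Finset.mem_image, Finset.mem_range]
    constructor
    · rintro (h | ⟨i, hi, rfl⟩)
      · exact Or.inl h
      · exact Or.inr ⟨i, hi, rfl⟩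
    · rintro (h | ⟨i, hi, rfl⟩)
      · exact Or.inl h
      · exact Or.inr ⟨i, hi, rfl⟩
  · intro T
    rw [Finset.sum_union hd, Finset.sum_image hinj]

lemma J_exists (n : ℕ) : ∃ J : Finset ℕ, (∀ j ∈ J, Odd j ∧ j < 2 ^ (n + 2)) ∧
    J.card + 1 = 2 ^ n + (if Even n then 2 else 0) ∧
    ∀ T : ℕ → ZMod 2, (∀ i, T (2 * i) = T i) →
      ∑ i ∈ Finset.range (2 ^ (n + 2)), T i + ∑ i ∈ Finset.range (2 ^ n), T (2 ^ (n + 1) + i) =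
        T 0 + ∑ j ∈ J, T j := by
  induction n using Nat.twoStepInduction with
  | zero =>
    refine ⟨{1, 3}, ?_, by simp, ?_⟩
    · intro j hj
      simp only [Finset.mem_insert, Finset.mem_singleton] at hj
      rcases hj with rfl | rfl <;> exact ⟨by decide, by norm_num⟩
    · intro T hT
      have h2 := hT 1
      simp [Finset.sum_range_succ] at h2 ⊢
      rw [h2]
      have := CharTwo.add_self_eq_zero (T 1)
      linear_combination this
  | one =>
    refine ⟨{7}, ?_, by simp, ?_⟩
    · intro j hj
      simp only [Finset.mem_singleton] at hj
      subst hj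
      exact ⟨by decide, by norm_num⟩
    · intro T hT
      have h2 := hT 1
      have h4 := hT 2
      have h6 := hT 3
      simp [Finset.sum_range_succ] at h2 h4 h6 ⊢
      rw [h6, h4, h2]
      have e1 := CharTwo.add_self_eq_zero (T 1)
      have e3 := CharTwo.add_self_eq_zero (T 3)
      have e5 := CharTwo.add_self_eq_zero (T 5)
      linear_combination 2 * e1 + e3 + e5
  | more n ih _ =>
    obtain ⟨J, hJ, hc, hs⟩ := ih
    obtain ⟨J1, hc1, hm1, hs1⟩ := adjoin J (2 ^ (n + 2)) (2 ^ n) (fun j hj => (hJ j hj).2.le)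
    have hp2 : 2 ^ (n + 2) = 4 * 2 ^ n := by ring
    have hp4 : 2 ^ (n + 2 + 2) = 16 * 2 ^ n := by ring
    have hp1 : 2 ^ (n + 1) = 2 * 2 ^ n := by ring
    have hb1 : ∀ j ∈ J1, Odd j ∧ j ≤ 3 * 2 ^ (n + 2) := by
      intro j hj
      rcases (hm1 j).1 hj with h | ⟨i, hi, rfl⟩
      · exact ⟨(hJ j h).1, by have := (hJ j h).2; omega⟩
      · exact ⟨⟨2 * 2 ^ n + i, by omega⟩, by omega⟩
    obtain ⟨J2, hc2, hm2, hs2⟩ := adjoin J1 (3 * 2 ^ (n + 2)) (2 ^ (n + 1)) (fun j hj => (hb1 j hj).2)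
    refine ⟨J2, ?_, ?_, ?_⟩
    · intro j hj
      rcases (hm2 j).1 hj with h | ⟨i, hi, rfl⟩
      · exact ⟨(hb1 j h).1, by have := (hb1 j h).2; have := Nat.two_pow_pos n; omega⟩
      · exact ⟨⟨6 * 2 ^ n + i, by omega⟩, by omega⟩
    · rw [hc2, hc1]
      have : Even (n + 2) ↔ Even n := by
        rw [Nat.even_add]; simp
      simp only [this]
      omega
    · intro T hT
      rw [hs2, hs1]
      have h0 := hs T hT
      have hA : ∀ k, ∑ i ∈ Finset.range (2 ^ (k + 1)), T i =
          ∑ i ∈ Finset.range (2 ^ k), T i + ∑ i ∈ Finset.range (2 ^ k), T (2 * i + 1) := by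
        intro k
        have := B_split T hT k 0
        simpa using this
      have a1 := hA (n + 2)
      have a2 := hA (n + 3)
      have b1 := B_split T hT n (2 ^ (n + 1))
      have b2 := B_split T hT (n + 1) (2 ^ (n + 2))
      rw [← pow_succ'] at b1 b2
      have o := sum_split2 (fun i => T (2 * i + 1)) (2 ^ (n + 2))
      have o' := sum_split2 (fun i => T (2 ^ (n + 3) + (2 * i + 1))) (2 ^ (n + 1))
      rw [← pow_succ'] at o o'

      have e1 : ∀ i, T (2 * (2 ^ (n + 2) + i) + 1) = T (2 ^ (n + 3) + (2 * i + 1)) := by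
        intro i; congr 1; ring
      have e2 : ∀ i, T (2 ^ (n + 3) + (2 * (2 ^ (n + 1) + i) + 1)) =
          T (3 * 2 ^ (n + 2) + (2 * i + 1)) := by
        intro i; congr 1; ring
      simp only [e1] at o
      simp only [e2] at o'
      have c1 := CharTwo.add_self_eq_zero (∑ i ∈ Finset.range (2 ^ (n + 2)), T (2 * i + 1))
      have c2 := CharTwo.add_self_eq_zero
        (∑ i ∈ Finset.range (2 ^ (n + 1)), T (2 ^ (n + 3) + (2 * i + 1)))
      linear_combination h0 + a1 + a2 + b1 + b2 + o + o' + c1 + c2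

/-- The full set of coset representatives; `h = n + 2`. -/
lemma Jtot_exists (n : ℕ) : ∃ J : Finset ℕ,
    (∀ j ∈ J, Odd j ∧ j < 3 * 2 ^ (n + 2) ∧ (2 ^ (n + 3) ≤ j → 2 ^ (n + 3) + 3 ≤ j)) ∧
    (∀ i < 2 ^ (n + 1) - 1, 2 ^ (n + 3) + 3 + 2 * i ∈ J) ∧
    J.card + 3 = 2 ^ (n + 2) + (if Even n then 2 else 0) ∧
    ∀ T : ℕ → ZMod 2, (∀ i, T (2 * i) = T i) → T (2 ^ (n + 3) + 1) = T (2 ^ (n + 2) + 1) →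
      ∑ i ∈ Finset.range (2 ^ (n + 2)), T i +
        ∑ i ∈ Finset.range (2 ^ (n + 2)), T (2 ^ (n + 3) + i) = T 0 + ∑ j ∈ J, T j := by
  obtain ⟨J, hJ, hc, hs⟩ := J_exists n
  have hp2 : 2 ^ (n + 2) = 4 * 2 ^ n := by ring
  have hp3 : 2 ^ (n + 3) = 8 * 2 ^ n := by ring
  have hp1 : 2 ^ (n + 1) = 2 * 2 ^ n := by ring
  have hpos := Nat.two_pow_pos n
  obtain ⟨J1, hc1, hm1, hs1⟩ := adjoin J (2 ^ (n + 2) + 2) (2 ^ n - 1)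
    (fun j hj => by have := (hJ j hj).2; omega)
  have hb1 : ∀ j ∈ J1, Odd j ∧ j < 2 ^ (n + 3) := by
    intro j hj
    rcases (hm1 j).1 hj with h | ⟨i, hi, rfl⟩
    · exact ⟨(hJ j h).1, by have := (hJ j h).2; omega⟩
    · exact ⟨⟨2 * 2 ^ n + 1 + i, by omega⟩, by omega⟩
  obtain ⟨J2, hc2, hm2, hs2⟩ := adjoin J1 (2 ^ (n + 3) + 2) (2 ^ (n + 1) - 1)
    (fun j hj => by have := (hb1 j hj).2; omega)
  refine ⟨J2, ?_, ?_, ?_, ?_⟩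
  · intro j hj
    rcases (hm2 j).1 hj with h | ⟨i, hi, rfl⟩
    · have := (hb1 j h).2
      exact ⟨(hb1 j h).1, by omega, by omega⟩
    · exact ⟨⟨4 * 2 ^ n + 1 + i, by omega⟩, by omega, by omega⟩
  · intro i hi
    exact (hm2 _).2 (Or.inr ⟨i, hi, by omega⟩)
  · rw [hc2, hc1]; omega
  · intro T hT hT1
    rw [hs2, hs1]
    have h0 := hs T hT
    have b1 := B_split T hT (n + 1) (2 ^ (n + 2))
    have b2 := B_split T hT n (2 ^ (n + 1))
    rw [← pow_succ'] at b1 b2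
    have r1 : ∀ c k : ℕ, 0 < k → ∑ i ∈ Finset.range k, T (c + (2 * i + 1)) =
        ∑ i ∈ Finset.range (k - 1), T (c + 2 + (2 * i + 1)) + T (c + 1) := by
      intro c k hk
      obtain ⟨k, rfl⟩ : ∃ l, k = l + 1 := ⟨k - 1, by omega⟩
      rw [Finset.sum_range_succ']
      simp only [Nat.add_sub_cancel, Nat.mul_zero, zero_add]
      congr 1
      refine Finset.sum_congr rfl fun i _ => ?_
      congr 1; ring
    have q1 := r1 (2 ^ (n + 3)) (2 ^ (n + 1)) (by positivity)
    have q2 := r1 (2 ^ (n + 2)) (2 ^ n) (by positivity)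
    have c1 := CharTwo.add_self_eq_zero (T (2 ^ (n + 2) + 1))
    linear_combination h0 + b1 + b2 + q1 + q2 + c1 + hT1

/-- The cosets are distinct and of full size; `h = n + 2`, `m = 2 h + 1`. -/
lemma coset_aux (h : ℕ) (J : Finset ℕ) (hh : 2 ≤ h)
    (hJ : ∀ j ∈ J, Odd j ∧ j < 3 * 2 ^ h ∧ (2 ^ (h + 1) ≤ j → 2 ^ (h + 1) + 3 ≤ j))
    (j j' r : ℕ) (hj : j ∈ J) (hj' : j' ∈ J) (hr : r ≤ h)
    (hmod : 2 ^ r * j ≡ j' [MOD 2 ^ (2 * h + 1) - 1]) : r = 0 ∧ j = j' := by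
  obtain ⟨ho, hlt, hge⟩ := hJ j hj
  obtain ⟨ho', hlt', hge'⟩ := hJ j' hj'
  have hp : 2 ^ (2 * h + 1) = 2 * (2 ^ h * 2 ^ h) := by ring
  have hp1 : 2 ^ (h + 1) = 2 * 2 ^ h := by ring
  have h4 : 4 ≤ 2 ^ h := by
    calc 4 = 2 ^ 2 := by norm_num
      _ ≤ 2 ^ h := Nat.pow_le_pow_right (by norm_num) hh
  have hbig : 4 * 2 ^ h ≤ 2 ^ h * 2 ^ h := Nat.mul_le_mul_right _ h4
  have hj'v : j' < 2 ^ (2 * h + 1) - 1 := by omega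
  by_cases hc : 2 ^ r * j < 2 ^ (2 * h + 1) - 1
  · have he : 2 ^ r * j = j' := Nat.ModEq.eq_of_lt_of_lt hmod hc hj'v
    rcases Nat.eq_zero_or_pos r with rfl | hpos
    · exact ⟨rfl, by simpa using he⟩
    · exfalso
      have : Even j' := by
        rw [← he]
        exact (Nat.even_pow.2 ⟨even_two, by omega⟩).mul_right _
      exact (Nat.not_even_iff_odd.2 ho') this
  · exfalso
    push Not at hc
    -- first r = h
    have hrh : r = h := by
      by_contra hne
      have hrle : r + 1 ≤ h := by omega
      have h1 : 2 * 2 ^ r ≤ 2 ^ h := by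
        rw [← pow_succ']; exact Nat.pow_le_pow_right (by norm_num) hrle
      have h2 : 2 * (2 ^ r * j) ≤ 2 ^ h * j := by
        rw [← mul_assoc]; exact Nat.mul_le_mul_right _ h1
      have h3 : 2 ^ h * j ≤ 2 ^ h * (3 * 2 ^ h) := Nat.mul_le_mul_left _ hlt.le
      have h5 : 2 ^ h * (3 * 2 ^ h) = 3 * (2 ^ h * 2 ^ h) := by ring
      omega
    subst hrh
    have hj2 : 2 ^ (r + 1) ≤ j := by
      by_contra hlt2
      have h2 : j ≤ 2 * 2 ^ r - 1 := by omega
      have h3 : 2 ^ r * j ≤ 2 ^ r * (2 * 2 ^ r - 1) := Nat.mul_le_mul_left _ h2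
      have h5 : 2 ^ r * (2 * 2 ^ r - 1) = 2 * (2 ^ r * 2 ^ r) - 2 ^ r := by
        rw [Nat.mul_sub, mul_one]; congr 1; ring
      omega
    have hj3 := hge hj2
    obtain ⟨i, rfl⟩ : ∃ i, j = 2 ^ (r + 1) + i := ⟨j - 2 ^ (r + 1), by omega⟩
    have hi : 3 ≤ i := by omega
    have hi2 : i < 2 ^ r := by omega
    have h6 : 2 ^ r * (2 ^ (r + 1) + i) = (2 ^ (2 * r + 1) - 1) + (1 + 2 ^ r * i) := by
      have : 2 ^ r * (2 ^ (r + 1) + i) = 2 * (2 ^ r * 2 ^ r) + 2 ^ r * i := by ring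
      omega
    have h7 : 1 + 2 ^ r * i ≡ j' [MOD 2 ^ (2 * r + 1) - 1] := by
      rw [h6] at hmod
      simpa [Nat.ModEq] using hmod
    have h8 : 2 ^ r * i ≤ 2 ^ r * (2 ^ r - 1) := Nat.mul_le_mul_left _ (by omega)
    have h9 : 2 ^ r * (2 ^ r - 1) = 2 ^ r * 2 ^ r - 2 ^ r := by rw [Nat.mul_sub, mul_one]
    have he := Nat.ModEq.eq_of_lt_of_lt h7 (by omega) hj'v
    have h10 : 2 ^ r * 3 ≤ 2 ^ r * i := Nat.mul_le_mul_left _ hi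
    omega

lemma coset_inj (h : ℕ) (J : Finset ℕ) (hh : 2 ≤ h)
    (hJ : ∀ j ∈ J, Odd j ∧ j < 3 * 2 ^ h ∧ (2 ^ (h + 1) ≤ j → 2 ^ (h + 1) + 3 ≤ j))
    (j j' r r' : ℕ) (hj : j ∈ J) (hj' : j' ∈ J) (hr : r < 2 * h + 1) (hr' : r' < 2 * h + 1)
    (hmod : 2 ^ r * j ≡ 2 ^ r' * j' [MOD 2 ^ (2 * h + 1) - 1]) : r = r' ∧ j = j' := by
  wlog hle : r' ≤ r generalizing r r' j j'
  · have := this j' j r' r hj' hj hr' hr hmod.symm (by omega)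
    exact ⟨this.1.symm, this.2.symm⟩
  have hodd : Nat.Coprime (2 ^ (2 * h + 1) - 1) 2 := by
    rw [Nat.coprime_two_right, Nat.odd_iff, pow_succ]
    have := Nat.two_pow_pos (2 * h)
    omega
  obtain ⟨s, rfl⟩ : ∃ s, r = r' + s := ⟨r - r', by omega⟩
  have hm2 : 2 ^ s * j ≡ j' [MOD 2 ^ (2 * h + 1) - 1] := by
    rw [pow_add 2 r' s, mul_assoc] at hmod
    exact Nat.ModEq.cancel_left_of_coprime (hodd.pow_right r') hmod
  by_cases hs : s ≤ h
  · obtain ⟨h1, h2⟩ := coset_aux h J hh hJ j j' s hj hj' hs hm2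
    exact ⟨by omega, h2⟩
  · exfalso
    have h3 : 2 ^ (2 * h + 1 - s) * j' ≡ j [MOD 2 ^ (2 * h + 1) - 1] := by
      have h4 := (hm2.mul_left (2 ^ (2 * h + 1 - s))).symm
      rw [← mul_assoc, ← pow_add, show 2 * h + 1 - s + s = 2 * h + 1 by omega] at h4
      refine h4.trans ?_
      have h5 : 2 ^ (2 * h + 1) ≡ 1 [MOD 2 ^ (2 * h + 1) - 1] := by
        have : 2 ^ (2 * h + 1) = (2 ^ (2 * h + 1) - 1) + 1 := by
          have := Nat.two_pow_pos (2 * h + 1); omega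
        conv_lhs => rw [this]
        simp [Nat.ModEq]
      simpa using h5.mul_right j
    obtain ⟨h1, _⟩ := coset_aux h J hh hJ j' j (2 * h + 1 - s) hj' hj (by omega) h3
    omega

/-- BCH bound. -/
lemma bch {K : Type*} [Field K] [Algebra (ZMod 2) K] (c : (ZMod 2)[X]) (hc : c ≠ 0) (v w : ℕ)
    (hdeg : c.degree < v) (β δ : K) (hβ : β ≠ 0)
    (hδ : ∀ a < v, ∀ b < v, δ ^ a = δ ^ b → a = b)
    (hz : ∀ i < w, aeval (β * δ ^ i) c = 0) : w < c.support.card := by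
  by_contra hle
  push Not at hle
  obtain ⟨a0, ha0⟩ : c.support.Nonempty := by simpa using hc
  set Q : K[X] := ∏ a ∈ c.support.erase a0, (X - C (δ ^ a)) with hQ
  have hQd : Q.natDegree < w := by
    rw [hQ, natDegree_prod_of_monic _ _ (fun a _ => monic_X_sub_C _)]
    simp only [natDegree_X_sub_C, Finset.sum_const, smul_eq_mul, mul_one]
    rw [Finset.card_erase_of_mem ha0]
    have : 0 < c.support.card := Finset.card_pos.2 ⟨a0, ha0⟩
    omega
  have hsupp : ∀ a ∈ c.support, a < v := by
    intro a ha
    have := (le_degree_of_mem_supp a ha).trans_lt hdeg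
    exact_mod_cast this
  have key : ∑ a ∈ c.support, algebraMap (ZMod 2) K (c.coeff a) * β ^ a * Q.eval (δ ^ a) = 0 := by
    have h1 : ∀ a, Q.eval (δ ^ a) = ∑ i ∈ Finset.range w, Q.coeff i * (δ ^ a) ^ i :=
      fun a => eval_eq_sum_range' hQd _
    simp_rw [h1, Finset.mul_sum]
    rw [Finset.sum_comm]
    refine Finset.sum_eq_zero fun i hi => ?_
    have h2 := hz i (Finset.mem_range.1 hi)
    rw [aeval_def, eval₂_eq_sum, Polynomial.sum] at h2
    have h3 : ∑ a ∈ c.support, algebraMap (ZMod 2) K (c.coeff a) * β ^ a *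
        (Q.coeff i * (δ ^ a) ^ i) = Q.coeff i *
        ∑ a ∈ c.support, algebraMap (ZMod 2) K (c.coeff a) * (β * δ ^ i) ^ a := by
      rw [Finset.mul_sum]
      refine Finset.sum_congr rfl fun a _ => ?_
      rw [mul_pow, ← pow_mul, ← pow_mul, mul_comm i a]; ring
    rw [h3, h2, mul_zero]
  rw [Finset.sum_eq_single a0] at key
  · have hc0 : algebraMap (ZMod 2) K (c.coeff a0) ≠ 0 := by
      rw [Ne, map_eq_zero]; exact mem_support_iff.1 ha0
    have hq0 : Q.eval (δ ^ a0) ≠ 0 := by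
      rw [hQ, eval_prod, Finset.prod_ne_zero_iff]
      intro a ha
      simp only [eval_sub, eval_X, eval_C]
      rw [sub_ne_zero]
      intro he
      have := hδ a0 (hsupp _ ha0) a (hsupp _ (Finset.mem_of_mem_erase ha)) he
      exact (Finset.ne_of_mem_erase ha) this.symm
    exact mul_ne_zero (mul_ne_zero hc0 (pow_ne_zero _ hβ)) hq0 key
  · intro a ha hne
    have : Q.eval (δ ^ a) = 0 := by
      rw [hQ, eval_prod]
      exact Finset.prod_eq_zero (Finset.mem_erase.2 ⟨hne, ha⟩) (by simp)
    rw [this, mul_zero]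
  · intro h; exact absurd ha0 h

lemma code_finrank (g : (ZMod 2)[X]) (hg : g ≠ 0) (v : ℕ) (hv : g.natDegree ≤ v) :
    Module.finrank (ZMod 2) ↥(Polynomial.degreeLT (ZMod 2) v ⊓
      (Ideal.span {g}).restrictScalars (ZMod 2)) = v - g.natDegree := by
  have he : Polynomial.degreeLT (ZMod 2) v ⊓ (Ideal.span {g}).restrictScalars (ZMod 2) =
      (Polynomial.degreeLT (ZMod 2) (v - g.natDegree)).map (LinearMap.mulLeft (ZMod 2) g) := by
    ext c
    simp only [Submodule.mem_inf, Submodule.restrictScalars_mem, Ideal.mem_span_singleton,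
      Submodule.mem_map, LinearMap.mulLeft_apply, mem_degreeLT]
    have hdeg : ∀ q : (ZMod 2)[X], q ≠ 0 →
        ((g * q).degree < (v : WithBot ℕ) ↔ q.degree < ((v - g.natDegree : ℕ) : WithBot ℕ)) := by
      intro q hq
      rw [degree_eq_natDegree (mul_ne_zero hg hq), degree_eq_natDegree hq, natDegree_mul hg hq]
      norm_cast
      omega
    constructor
    · rintro ⟨h1, q, rfl⟩
      refine ⟨q, ?_, rfl⟩
      rcases eq_or_ne q 0 with rfl | hq
      · simp
      · exact (hdeg q hq).1 h1
    · rintro ⟨q, hq, rfl⟩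
      refine ⟨?_, dvd_mul_right _ _⟩
      rcases eq_or_ne q 0 with rfl | hq0
      · simp
      · exact (hdeg q hq0).2 hq
  rw [he]
  have hinj : Function.Injective (LinearMap.mulLeft (ZMod 2) g) := by
    intro a b hab
    exact mul_left_cancel₀ hg hab
  rw [← (Submodule.equivMapOfInjective _ hinj _).finrank_eq, (degreeLTEquiv (ZMod 2) _).finrank_eq]
  simp

/-- roots of the quotient polynomial -/
lemma quot_roots {K : Type*} [Field K] [Algebra (ZMod 2) K] (v : ℕ) (hv : (v : ZMod 2) = 1)
    (S : (ZMod 2)[X]) (α : K) (hα : orderOf α = v) (D : Finset K)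
    (hD : ∀ β : K, β ∈ D ↔ β ^ v = 1 ∧ aeval β S ≠ 0)
    (g : (ZMod 2)[X]) (hg : g = (X ^ v - 1) / EuclideanDomain.gcd (X ^ v - 1) S) :
    g ≠ 0 ∧ (∀ β : K, aeval β g = 0 ↔ β ∈ D) ∧ g.natDegree = D.card ∧ g.natDegree ≤ v := by
  have hv0 : 0 < v := by
    rcases Nat.eq_zero_or_pos v with rfl | h
    · simp at hv
    · exact h
  set P : (ZMod 2)[X] := X ^ v - 1 with hP
  have hPd : P.natDegree = v := by
    rw [hP]; exact natDegree_X_pow_sub_C (r := (1 : ZMod 2))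
  have hP0 : P ≠ 0 := by
    intro h; rw [h] at hPd; simp at hPd; omega
  set d := EuclideanDomain.gcd P S with hd
  have hdP : d ∣ P := EuclideanDomain.gcd_dvd_left _ _
  have hdS : d ∣ S := EuclideanDomain.gcd_dvd_right _ _
  have hd0 : d ≠ 0 := fun h => hP0 (by rw [h] at hdP; exact zero_dvd_iff.1 hdP)
  have hgd : d * g = P := by rw [hg]; exact EuclideanDomain.mul_div_cancel' hd0 hdP
  have hg0 : g ≠ 0 := by
    rintro h; rw [h, mul_zero] at hgd; exact hP0 hgd.symm
  have hsep : P.Separable := by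
    rw [hP, X_pow_sub_one_separable_iff, hv]; exact one_ne_zero
  have hcop : IsCoprime d g := by rw [← hgd] at hsep; exact hsep.isCoprime
  have hgsep : g.Separable := by rw [← hgd] at hsep; exact hsep.of_mul_right
  have hPev : ∀ β : K, aeval β P = β ^ v - 1 := by intro β; simp [hP]
  have hroot : ∀ β : K, aeval β g = 0 ↔ β ∈ D := by
    intro β
    rw [hD]
    constructor
    · intro h
      have hPβ : aeval β P = 0 := by rw [← hgd, map_mul, h, mul_zero]
      refine ⟨by rw [hPev, sub_eq_zero] at hPβ; exact hPβ, fun hS => ?_⟩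
      have hdβ : aeval β d = 0 := by
        rw [hd, EuclideanDomain.gcd_eq_gcd_ab, map_add, map_mul, map_mul, hPβ, hS]; simp
      obtain ⟨a, b, hab⟩ := hcop
      have := congrArg (aeval β) hab
      rw [map_add, map_mul, map_mul, h, hdβ] at this
      simp at this
    · rintro ⟨h1, h2⟩
      have hPβ : aeval β P = 0 := by rw [hPev, h1, sub_self]
      rw [← hgd, map_mul, mul_eq_zero] at hPβ
      rcases hPβ with h | h
      · obtain ⟨q, hq⟩ := hdS
        exact absurd (by rw [hq, map_mul, h, zero_mul]) h2
      · exact h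
  have hgv : g.natDegree ≤ v := by rw [← hPd]; exact natDegree_le_of_dvd ⟨d, by rw [mul_comm]; exact hgd.symm⟩ hP0
  refine ⟨hg0, hroot, ?_, hgv⟩
  have hspl : (g.map (algebraMap (ZMod 2) K)).Splits := by
    have h1 : (P.map (algebraMap (ZMod 2) K)).Splits := by
      have hprim : IsPrimitiveRoot α v := hα ▸ IsPrimitiveRoot.orderOf α
      have : P.map (algebraMap (ZMod 2) K) = X ^ v - 1 := by simp [hP]
      rw [this]
      exact X_pow_sub_one_splits hprim
    exact Splits.of_dvd h1 ((Polynomial.map_ne_zero_iff (algebraMap (ZMod 2) K).injective).2 hP0) (Polynomial.map_dvd _ ⟨d, by rw [mul_comm]; exact hgd.symm⟩)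
  have := card_rootSet_eq_natDegree hgsep hspl
  rw [← this, ← Nat.card_eq_fintype_card]
  have hset : g.rootSet K = (D : Set K) := by
    ext β
    rw [mem_rootSet]
    simp [hg0, hroot]
  rw [hset]
  simp

lemma geom_char2 {K : Type*} [Field K] [CharP K 2] (x : K) (h : ℕ) :
    (x + 1) ^ (2 ^ h - 1) = ∑ i ∈ Finset.range (2 ^ h), x ^ i := by
  induction h with
  | zero => simp
  | succ k ih =>
    have h1 : 2 ^ (k + 1) - 1 = (2 ^ k - 1) + 2 ^ k := by
      have := Nat.two_pow_pos k
      rw [pow_succ]; omega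
    rw [h1, pow_add, ih, add_pow_char_pow, one_pow, pow_succ, mul_two, Finset.sum_range_add, mul_add,
      mul_one, add_comm, Finset.sum_mul]
    simp_rw [pow_add, mul_comm]

lemma gf_pow_card (m : ℕ) (hm : m ≠ 0) (x : GaloisField 2 m) : x ^ 2 ^ m = x := by
  have := Fintype.ofFinite (GaloisField 2 m)
  have h := FiniteField.pow_card x
  rwa [← Nat.card_eq_fintype_card, GaloisField.card 2 m hm] at h

lemma gf_trace (m : ℕ) (hm : m ≠ 0) (x : GaloisField 2 m) :
    algebraMap (ZMod 2) (GaloisField 2 m) (Algebra.trace (ZMod 2) (GaloisField 2 m) x) =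
      ∑ r ∈ Finset.range m, x ^ 2 ^ r := by
  rw [FiniteField.algebraMap_trace_eq_sum_pow, GaloisField.finrank 2 hm]
  simp

lemma gf_trace_sq (m : ℕ) (hm : m ≠ 0) (x : GaloisField 2 m) :
    Algebra.trace (ZMod 2) (GaloisField 2 m) (x ^ 2) =
      Algebra.trace (ZMod 2) (GaloisField 2 m) x := by
  apply (algebraMap (ZMod 2) (GaloisField 2 m)).injective
  rw [gf_trace m hm, gf_trace m hm]
  obtain ⟨k, rfl⟩ : ∃ k, m = k + 1 := ⟨m - 1, by omega⟩
  simp_rw [← pow_mul, ← pow_succ']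
  rw [Finset.sum_range_succ, Finset.sum_range_succ' _ k, gf_pow_card _ hm]
  simp

lemma gf_trace_pow (m : ℕ) (hm : m ≠ 0) (x : GaloisField 2 m) (k : ℕ) :
    Algebra.trace (ZMod 2) (GaloisField 2 m) (x ^ 2 ^ k) =
      Algebra.trace (ZMod 2) (GaloisField 2 m) x := by
  induction k with
  | zero => simp
  | succ k ih => rw [pow_succ, pow_mul, gf_trace_sq m hm, ih]

lemma trace_expand (n : ℕ) (x : GaloisField 2 (2 * (n + 2) + 1)) (J : Finset ℕ)
    (hJ : ∀ T : ℕ → ZMod 2, (∀ i, T (2 * i) = T i) →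
      T (2 ^ (n + 3) + 1) = T (2 ^ (n + 2) + 1) →
      ∑ i ∈ Finset.range (2 ^ (n + 2)), T i +
        ∑ i ∈ Finset.range (2 ^ (n + 2)), T (2 ^ (n + 3) + i) = T 0 + ∑ j ∈ J, T j) :
    Algebra.trace (ZMod 2) (GaloisField 2 (2 * (n + 2) + 1))
      ((x + 1) ^ (2 ^ (2 * (n + 2)) - 2 ^ (n + 2) + 1)) =
    1 + ∑ j ∈ J, Algebra.trace (ZMod 2) (GaloisField 2 (2 * (n + 2) + 1)) (x ^ j) := by
  have hm : 2 * (n + 2) + 1 ≠ 0 := by omega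
  set T : ℕ → ZMod 2 := fun i => Algebra.trace (ZMod 2) (GaloisField 2 (2 * (n + 2) + 1)) (x ^ i)
    with hT
  have hTpow : ∀ i k, T (i * 2 ^ k) = T i := by
    intro i k
    simp only [hT]
    rw [pow_mul, gf_trace_pow _ hm]
  have hT2 : ∀ i, T (2 * i) = T i := by
    intro i
    have := hTpow i 1
    rwa [pow_one, mul_comm] at this
  have hTred : ∀ a b, T (a + b * 2 ^ (2 * (n + 2) + 1)) = T (a + b) := by
    intro a b
    simp only [hT]
    rw [pow_add, pow_mul, gf_pow_card _ hm, pow_add]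
  have hT1 : T (2 ^ (n + 3) + 1) = T (2 ^ (n + 2) + 1) := by
    rw [← hTpow (2 ^ (n + 3) + 1) (n + 2)]
    have : (2 ^ (n + 3) + 1) * 2 ^ (n + 2) = 2 ^ (n + 2) + 1 * 2 ^ (2 * (n + 2) + 1) := by ring
    rw [this, hTred]
  have hT0 : T 0 = 1 := by
    simp only [hT, pow_zero]
    apply (algebraMap (ZMod 2) (GaloisField 2 (2 * (n + 2) + 1))).injective
    rw [gf_trace _ hm, map_one]
    simp only [one_pow, Finset.sum_const, Finset.card_range, nsmul_eq_mul, mul_one]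
    have h2 : (2 : GaloisField 2 (2 * (n + 2) + 1)) = 0 := CharTwo.two_eq_zero
    push_cast
    linear_combination ((n : GaloisField 2 (2 * (n + 2) + 1)) + 2) * h2
  have hexp : 2 ^ (2 * (n + 2)) - 2 ^ (n + 2) + 1 = (2 ^ (n + 2) - 1) * 2 ^ (n + 2) + 1 := by
    rw [Nat.sub_mul, one_mul, ← pow_add, two_mul]
  have hx : (x + 1) ^ (2 ^ (2 * (n + 2)) - 2 ^ (n + 2) + 1) =
      ∑ i ∈ Finset.range (2 ^ (n + 2)), x ^ (i * 2 ^ (n + 2)) +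
      ∑ i ∈ Finset.range (2 ^ (n + 2)), x ^ (i * 2 ^ (n + 2) + 1) := by
    rw [hexp, pow_succ, pow_mul, geom_char2, sum_pow_char_pow, mul_add (∑ i ∈ _, _) x 1, mul_one,
      Finset.sum_mul, add_comm (∑ i ∈ _, _ * x)]
    simp_rw [pow_succ x (_ * _), pow_mul]
  rw [hx, map_add, map_sum, map_sum]
  have e2 : ∀ i, T (i * 2 ^ (n + 2) + 1) = T (2 ^ (n + 3) + i) := by
    intro i
    rw [← hTpow _ (n + 3)]
    have : (i * 2 ^ (n + 2) + 1) * 2 ^ (n + 3) = 2 ^ (n + 3) + i * 2 ^ (2 * (n + 2) + 1) := by ring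
    rw [this, hTred]
  change ∑ i ∈ Finset.range (2 ^ (n + 2)), T (i * 2 ^ (n + 2)) +
    ∑ i ∈ Finset.range (2 ^ (n + 2)), T (i * 2 ^ (n + 2) + 1) = 1 + ∑ j ∈ J, T j
  simp_rw [e2, hTpow]
  rw [hJ T hT2 hT1, hT0]

lemma geom_orth {K : Type*} [Field K] (v : ℕ) (hv : (v : K) = 1) (y : K) (hy : y ^ v = 1) :
    ∑ t ∈ Finset.range v, y ^ t = if y = 1 then 1 else 0 := by
  split_ifs with h
  · simp [h, hv]
  · have := geom_sum_mul y v
    rw [hy, sub_self] at this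
    exact (mul_eq_zero.1 this).resolve_right (sub_ne_zero.2 h)

lemma pow_pow_one {K : Type*} [Field K] (a : K) (v k : ℕ) (h : a ^ v = 1) : (a ^ k) ^ v = 1 := by
  rw [← pow_mul, mul_comm, pow_mul, h, one_pow]

lemma pow_iff_mod {K : Type*} [Field K] (a : K) (ha : a ≠ 0) (x y : ℕ) :
    a ^ x = a ^ y ↔ x ≡ y [MOD orderOf a] := by
  have h1 : orderOf a = orderOf (Units.mk0 a ha) := by
    rw [← orderOf_units, Units.val_mk0]
  rw [h1, ← pow_eq_pow_iff_modEq, Units.ext_iff]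
  simp

lemma S_eval (n : ℕ) (α : GaloisField 2 (2 * (n + 2) + 1))
    (hα : orderOf α = 2 ^ (2 * (n + 2) + 1) - 1)
    (f : GaloisField 2 (2 * (n + 2) + 1) → GaloisField 2 (2 * (n + 2) + 1))
    (J : Finset ℕ)
    (hf : ∀ x, Algebra.trace (ZMod 2) (GaloisField 2 (2 * (n + 2) + 1)) (f (x + 1)) =
      1 + ∑ j ∈ J, Algebra.trace (ZMod 2) (GaloisField 2 (2 * (n + 2) + 1)) (x ^ j))
    (hvK : ((2 ^ (2 * (n + 2) + 1) - 1 : ℕ) : GaloisField 2 (2 * (n + 2) + 1)) = 1)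
    (β : GaloisField 2 (2 * (n + 2) + 1)) (hβ : β ^ (2 ^ (2 * (n + 2) + 1) - 1) = 1) :
    aeval β (traceSeqPoly (2 * (n + 2) + 1) α f) =
      (if β = 1 then 1 else 0) + ∑ p ∈ J ×ˢ Finset.range (2 * (n + 2) + 1),
        if β * α ^ (2 ^ p.2 * p.1) = 1 then 1 else 0 := by
  have hm : 2 * (n + 2) + 1 ≠ 0 := by omega
  unfold traceSeqPoly
  rw [map_sum]
  simp only [map_mul, aeval_C, map_pow, aeval_X, hf, map_add, map_one, map_sum, gf_trace _ hm]
  simp_rw [add_mul, one_mul]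
  rw [Finset.sum_add_distrib, geom_orth _ hvK β hβ]
  congr 1
  rw [Finset.sum_product]
  simp_rw [Finset.sum_mul]
  rw [Finset.sum_comm]
  refine Finset.sum_congr rfl fun j _ => ?_
  rw [Finset.sum_comm]
  refine Finset.sum_congr rfl fun r _ => ?_
  rw [← geom_orth _ hvK]
  · refine Finset.sum_congr rfl fun t _ => ?_
    rw [mul_pow, ← pow_mul, ← pow_mul, ← pow_mul, mul_comm (β ^ t)]
    congr 2
    ring
  · rw [mul_pow, hβ, one_mul]
    exact pow_pow_one _ _ _ (hα ▸ pow_orderOf_eq_one α)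

/-- Theorem 5: for f₅(x) = x^{2^{m−1} − 2^{(m−1)/2} + 1} over 𝔽_{2^m}, m ≥ 7 odd,
the code C_s has length 2^m − 1 and dimension 2^m − 1 − L_s, where
L_s = 1 + m(2^{(m−1)/2} − 1) if m ≡ 1 (mod 4) and
L_s = 1 + m(2^{(m−1)/2} − 3) if m ≡ 3 (mod 4), and the minimum distance
satisfies 2^{(m−3)/2} ≤ d(C_s) ≤ L_s. -/
theorem stmt14 (m : ℕ) (hm7 : 7 ≤ m) (hmo : Odd m)
    (α : GaloisField 2 m) (hα : orderOf α = 2 ^ m - 1)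
    (f : GaloisField 2 m → GaloisField 2 m)
    (hf : ∀ x, f x = x ^ (2 ^ (m - 1) - 2 ^ ((m - 1) / 2) + 1)) :
    Module.finrank (ZMod 2) ↥(codeC m α f) =
      2 ^ m - 1 - (genPoly m α f).natDegree ∧
    (m % 4 = 1 →
      (genPoly m α f).natDegree = 1 + m * (2 ^ ((m - 1) / 2) - 1)) ∧
    (m % 4 = 3 →
      (genPoly m α f).natDegree = 1 + m * (2 ^ ((m - 1) / 2) - 3)) ∧
    (∃ d : ℕ, IsLeast (wtSet (codeC m α f)) d ∧
      2 ^ ((m - 3) / 2) ≤ d ∧ d ≤ (genPoly m α f).natDegree) := by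
  obtain ⟨n, rfl⟩ : ∃ n, m = 2 * (n + 2) + 1 := by
    obtain ⟨k, rfl⟩ := hmo
    exact ⟨k - 2, by omega⟩
  have hn : 1 ≤ n := by omega
  have hm : 2 * (n + 2) + 1 ≠ 0 := by omega
  have ea : 2 * (n + 2) + 1 - 1 = 2 * (n + 2) := by omega
  have eb : (2 * (n + 2)) / 2 = n + 2 := by omega
  have ec : (2 * (n + 2) + 1 - 3) / 2 = n + 1 := by omega
  rw [ea, eb] at hf
  rw [ea, eb, ec]
  obtain ⟨J, hJ, hJmem, hJc, hJs⟩ := Jtot_exists n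
  have htr : ∀ x, Algebra.trace (ZMod 2) (GaloisField 2 (2 * (n + 2) + 1)) (f (x + 1)) =
      1 + ∑ j ∈ J, Algebra.trace (ZMod 2) (GaloisField 2 (2 * (n + 2) + 1)) (x ^ j) := by
    intro x
    rw [hf]
    exact trace_expand n x J hJs
  have hvpos : 1 ≤ 2 ^ (2 * (n + 2) + 1) := Nat.one_le_two_pow
  have hv2 : ((2 ^ (2 * (n + 2) + 1) - 1 : ℕ) : ZMod 2) = 1 := by
    rw [Nat.cast_sub hvpos]
    have h2 : (2 : ZMod 2) = 0 := rfl
    simp [h2]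
  have hvK : ((2 ^ (2 * (n + 2) + 1) - 1 : ℕ) : GaloisField 2 (2 * (n + 2) + 1)) = 1 := by
    have := congrArg (algebraMap (ZMod 2) (GaloisField 2 (2 * (n + 2) + 1))) hv2
    simpa only [map_natCast, map_one] using this
  have hS := S_eval n α hα f J htr hvK
  set v := 2 ^ (2 * (n + 2) + 1) - 1 with hvdef
  have hppos : 2 ^ (2 * (n + 2) + 1) = 2 * (2 ^ (n + 2) * 2 ^ (n + 2)) := by ring
  have hn8 : 8 ≤ 2 ^ (n + 2) := by
    calc 8 = 2 ^ 3 := by norm_num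
      _ ≤ 2 ^ (n + 2) := Nat.pow_le_pow_right (by norm_num) (by omega)
  have hn88 : 8 * 2 ^ (n + 2) ≤ 2 ^ (n + 2) * 2 ^ (n + 2) := Nat.mul_le_mul_right _ hn8
  have hvbig : 16 * 2 ^ (n + 2) - 1 ≤ v := by omega
  have hα0 : α ≠ 0 := by
    rintro rfl
    rw [orderOf_zero] at hα
    omega
  have hαv : α ^ v = 1 := by rw [← hα]; exact pow_orderOf_eq_one α
  have hpowmod : ∀ a b, α ^ a = α ^ b ↔ a ≡ b [MOD v] := by
    intro a b
    rw [← hα]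
    exact pow_iff_mod α hα0 a b
  set I := J ×ˢ Finset.range (2 * (n + 2) + 1) with hI
  set φ : ℕ × ℕ → GaloisField 2 (2 * (n + 2) + 1) := fun p => (α ^ (2 ^ p.2 * p.1))⁻¹ with hφ
  have hJlt : ∀ j ∈ J, 0 < j ∧ j < v := by
    intro j hj
    obtain ⟨h1, h2, _⟩ := hJ j hj
    exact ⟨h1.pos, by omega⟩
  have hφinj : Set.InjOn φ I := by
    rintro ⟨j, r⟩ hp ⟨j', r'⟩ hp' he
    simp only [hI, Finset.coe_product, Set.mem_prod, Finset.mem_coe, Finset.mem_range] at hp hp'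
    simp only [hφ, inv_inj] at he
    rw [hpowmod] at he
    have := coset_inj (n + 2) J (by omega) hJ j j' r r' hp.1 hp'.1 hp.2 hp'.2 he
    rw [this.1, this.2]
  have hvcop : Nat.Coprime v 2 := by
    rw [Nat.coprime_two_right, Nat.odd_iff]
    omega
  have hφ1 : ∀ p ∈ I, φ p ≠ 1 := by
    rintro ⟨j, r⟩ hp he
    simp only [hI, Finset.mem_product] at hp
    simp only [hφ, inv_eq_one] at he
    have h1 : α ^ (2 ^ r * j) = α ^ 0 := by rw [he, pow_zero]
    rw [hpowmod, Nat.modEq_zero_iff_dvd] at h1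
    have h2 := (hvcop.pow_right r).dvd_of_dvd_mul_left h1
    have := hJlt j hp.1
    have := Nat.le_of_dvd this.1 h2
    omega
  set D := insert 1 (I.image φ) with hD
  have h1D : (1 : GaloisField 2 (2 * (n + 2) + 1)) ∉ I.image φ := by
    intro h
    obtain ⟨p, hp, he⟩ := Finset.mem_image.1 h
    exact hφ1 p hp he
  have hDcard : D.card = 1 + (2 * (n + 2) + 1) * J.card := by
    rw [hD, Finset.card_insert_of_notMem h1D, Finset.card_image_of_injOn hφinj, hI,
      Finset.card_product, Finset.card_range]
    ring
  have hS' : ∀ β : GaloisField 2 (2 * (n + 2) + 1), β ^ v = 1 →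
      aeval β (traceSeqPoly (2 * (n + 2) + 1) α f) = if β ∈ D then 1 else 0 := by
    intro β hβ
    rw [hS β hβ]
    have h1 : ∀ p : ℕ × ℕ, (β * α ^ (2 ^ p.2 * p.1) = 1) ↔ φ p = β := by
      intro p
      have : α ^ (2 ^ p.2 * p.1) ≠ 0 := pow_ne_zero _ hα0
      rw [hφ, mul_eq_one_iff_eq_inv₀ this, eq_comm]
    simp_rw [h1]
    have h2 : ∑ p ∈ I, (if φ p = β then (1 : GaloisField 2 (2 * (n + 2) + 1)) else 0) =
        if β ∈ I.image φ then 1 else 0 := by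
      rw [← Finset.sum_image (f := fun y => if y = β then (1 : GaloisField 2 (2 * (n + 2) + 1)) else 0) hφinj]
      simp
    rw [h2, hD]
    by_cases hb : β = 1
    · subst hb
      simp [h1D]
    · simp [hb]
  have hDroot : ∀ β ∈ D, β ^ v = 1 := by
    intro β hβ
    rw [hD, Finset.mem_insert, Finset.mem_image] at hβ
    rcases hβ with rfl | ⟨p, _, rfl⟩
    · exact one_pow _
    · simp only [hφ]
      rw [inv_pow, pow_pow_one _ _ _ hαv, inv_one]
  have hDiff : ∀ β : GaloisField 2 (2 * (n + 2) + 1),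
      β ∈ D ↔ β ^ v = 1 ∧ aeval β (traceSeqPoly (2 * (n + 2) + 1) α f) ≠ 0 := by
    intro β
    constructor
    · intro h
      refine ⟨hDroot β h, ?_⟩
      rw [hS' β (hDroot β h), if_pos h]
      exact one_ne_zero
    · rintro ⟨h1, h2⟩
      by_contra h3
      rw [hS' β h1, if_neg h3] at h2
      exact h2 rfl
  obtain ⟨hg0, hgroot, hgdeg, hgv⟩ := quot_roots v hv2 (traceSeqPoly (2 * (n + 2) + 1) α f) α hα D
    hDiff (genPoly (2 * (n + 2) + 1) α f) rfl
  have hcode : codeC (2 * (n + 2) + 1) α f = Polynomial.degreeLT (ZMod 2) v ⊓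
      (Ideal.span {genPoly (2 * (n + 2) + 1) α f}).restrictScalars (ZMod 2) := rfl
  set g := genPoly (2 * (n + 2) + 1) α f with hg
  rw [hDcard] at hgdeg
  have hpar : Even n ∨ Odd n := Nat.even_or_odd n
  have hJle : J.card ≤ 2 ^ (n + 2) - 1 := by
    split_ifs at hJc <;> omega
  have hJodd : Odd J.card := by
    have : 2 ^ (n + 2) = 4 * 2 ^ n := by ring
    rw [Nat.odd_iff]
    split_ifs at hJc <;> omega
  have hgparity : Even g.natDegree := by
    rw [hgdeg]
    have : Odd ((2 * (n + 2) + 1) * J.card) := Odd.mul ⟨n + 2, rfl⟩ hJodd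
    rw [add_comm]
    exact this.add_odd odd_one
  have hglt : g.natDegree < v := by
    have h1 : 2 * (n + 2) + 1 ≤ 2 * 2 ^ (n + 2) := by
      have := Nat.lt_two_pow_self (n := n + 2)
      omega
    have h2 : (2 * (n + 2) + 1) * J.card ≤ 2 * 2 ^ (n + 2) * (2 ^ (n + 2) - 1) :=
      Nat.mul_le_mul h1 hJle
    have h3 : 2 * 2 ^ (n + 2) * (2 ^ (n + 2) - 1) = 2 * (2 ^ (n + 2) * 2 ^ (n + 2)) - 2 * 2 ^ (n + 2) := by
      rw [Nat.mul_sub, mul_one, mul_assoc]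
    omega
  refine ⟨?_, ?_, ?_, ?_⟩
  · rw [hcode]
    exact code_finrank g hg0 v hgv
  · intro h4
    have : Even n := by rw [Nat.even_iff]; omega
    rw [if_pos this] at hJc
    rw [hgdeg]
    congr 2
    omega
  · intro h4
    have : ¬ Even n := by rw [Nat.even_iff]; omega
    rw [if_neg this] at hJc
    rw [hgdeg]
    congr 2
    omega
  · have hgmem : g ∈ codeC (2 * (n + 2) + 1) α f := by
      rw [hcode, Submodule.mem_inf]
      refine ⟨?_, ?_⟩
      · rw [mem_degreeLT, degree_eq_natDegree hg0]
        exact_mod_cast hglt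
      · rw [Submodule.restrictScalars_mem]
        exact Ideal.mem_span_singleton_self g
    have hgw : g.support.card ∈ wtSet (codeC (2 * (n + 2) + 1) α f) := ⟨g, hgmem, hg0, rfl⟩
    have hne : (wtSet (codeC (2 * (n + 2) + 1) α f)).Nonempty := ⟨_, hgw⟩
    have hleast : IsLeast (wtSet (codeC (2 * (n + 2) + 1) α f))
        (sInf (wtSet (codeC (2 * (n + 2) + 1) α f))) :=
      ⟨Nat.sInf_mem hne, fun w hw => Nat.sInf_le hw⟩
    refine ⟨_, hleast, ?_, ?_⟩
    · obtain ⟨c, hc, hc0, hcw⟩ := hleast.1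
      rw [← hcw]
      rw [hcode, Submodule.mem_inf, Submodule.restrictScalars_mem, Ideal.mem_span_singleton,
        mem_degreeLT] at hc
      obtain ⟨hcd, hgc⟩ := hc
      have := bch c hc0 v (2 ^ (n + 1) - 1) hcd ((α ^ (2 ^ (n + 3) + 3))⁻¹) ((α ^ 2)⁻¹)
        (inv_ne_zero (pow_ne_zero _ hα0)) ?_ ?_
      · have := Nat.two_pow_pos (n + 1)
        omega
      · intro a ha b hb hab
        rw [inv_pow, inv_pow, inv_inj, ← pow_mul, ← pow_mul, hpowmod] at hab
        exact Nat.ModEq.eq_of_lt_of_lt (Nat.ModEq.cancel_left_of_coprime hvcop hab) ha hb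
      · intro i hi
        have hmem : (α ^ (2 ^ (n + 3) + 3))⁻¹ * (α ^ 2)⁻¹ ^ i ∈ D := by
          rw [hD, Finset.mem_insert, Finset.mem_image]
          right
          refine ⟨(2 ^ (n + 3) + 3 + 2 * i, 0), ?_, ?_⟩
          · rw [hI, Finset.mem_product]
            exact ⟨hJmem i hi, by simp⟩
          · simp only [hφ]
            rw [inv_pow, ← mul_inv, ← pow_mul, ← pow_add, pow_zero, one_mul]
        have h0 := (hgroot _).2 hmem
        obtain ⟨q, rfl⟩ := hgc
        rw [map_mul, h0, zero_mul]
    · refine (hleast.2 hgw).trans ?_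
      have hsub : g.support.card ≤ g.natDegree + 1 := by
        have := Finset.card_le_card (supp_subset_range_natDegree_succ (p := g))
        simpa using this
      have hev : (g.support.card : ZMod 2) = 0 := by
        have h1 : aeval (1 : GaloisField 2 (2 * (n + 2) + 1)) g = 0 :=
          (hgroot 1).2 (Finset.mem_insert_self _ _)
        have h2 : g.eval 1 = 0 := by
          have h3 := aeval_algebraMap_apply (GaloisField 2 (2 * (n + 2) + 1)) (1 : ZMod 2) g
          rw [map_one, h1] at h3
          have h4 := h3.symm
          rw [map_eq_zero] at h4
          simpa using h4
        rw [eval_eq_sum, Polynomial.sum] at h2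
        rw [← h2, Finset.card_eq_sum_ones, Nat.cast_sum]
        refine Finset.sum_congr rfl fun a ha => ?_
        have h5 : g.coeff a ≠ 0 := mem_support_iff.1 ha
        have h6 : ∀ z : ZMod 2, z ≠ 0 → z = 1 := by decide
        rw [h6 _ h5]
        simp
      rw [ZMod.natCast_eq_zero_iff] at hev
      obtain ⟨k, hk⟩ := hgparity
      omega
end
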